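/- Let a, b and ℓ > 2 be pairwise coprime nonzero integers with ℓ positive. If ℓ ∈ G_{(a,b)}, then exactly one of the following holds: ℓ ∈ OG_{(a,b)} or ℓ ∈ EG_{(a,b)} (that is, ℓ is oddly-good or evenly-good, but not both). -/

import Mathlib

/-! If `j` is odd, `k` is even, `a ^ j ≡ -b ^ j` and `a ^ k ≡ -b ^ k` modulo `ℓ`, then computing
`a ^ (j * k)` in two ways gives `b ^ (j * k) ≡ -b ^ (j * k)`. Hence `ℓ ∣ 2 * b ^ (j * k)`, so
`ℓ ∣ 2` as `b` is prime to `ℓ`, which contradicts `2 < ℓ`. -/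

/-- `d ∈ G_{(a,b)}`: `d` divides `a^k + b^k` for some integer `k ≥ 1`. -/
def Good (a b : ℤ) (d : ℕ) : Prop := ∃ k : ℕ, 1 ≤ k ∧ (d : ℤ) ∣ a ^ k + b ^ k

/-- `d ∈ OG_{(a,b)}`: `d` divides `a^k + b^k` for some odd integer `k ≥ 1`. -/
def OddlyGood (a b : ℤ) (d : ℕ) : Prop :=
  ∃ k : ℕ, Odd k ∧ 1 ≤ k ∧ (d : ℤ) ∣ a ^ k + b ^ k

/-- `d ∈ EG_{(a,b)}`: `d` divides `a^k + b^k` for some even integer `k ≥ 2`. -/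
def EvenlyGood (a b : ℤ) (d : ℕ) : Prop :=
  ∃ k : ℕ, Even k ∧ 2 ≤ k ∧ (d : ℤ) ∣ a ^ k + b ^ k

theorem good_oddly_xor_evenly (a b : ℤ) (ha : a ≠ 0) (hb : b ≠ 0) (ℓ : ℕ) (hℓ : 2 < ℓ)
    (hab : IsCoprime a b) (haℓ : IsCoprime a (ℓ : ℤ)) (hbℓ : IsCoprime b (ℓ : ℤ))
    (h : Good a b ℓ) :
    (OddlyGood a b ℓ ∨ EvenlyGood a b ℓ) ∧
      ¬ (OddlyGood a b ℓ ∧ EvenlyGood a b ℓ) := by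
  constructor
  · obtain ⟨k, hk, hd⟩ := h
    rcases Nat.even_or_odd k with he | ho
    · exact Or.inr ⟨k, he, by obtain ⟨m, rfl⟩ := he; omega, hd⟩
    · exact Or.inl ⟨k, ho, hk, hd⟩
  · rintro ⟨⟨j, hj, -, hdj⟩, ⟨k, hk, -, hdk⟩⟩
    have h1 : (ℓ : ℤ) ∣ a ^ (j * k) - b ^ (j * k) := by
      have := sub_dvd_pow_sub_pow (a ^ j) (-b ^ j) k
      rw [sub_neg_eq_add, hk.neg_pow, ← pow_mul, ← pow_mul] at this
      exact hdj.trans this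
    have h2 : (ℓ : ℤ) ∣ a ^ (j * k) + b ^ (j * k) := by
      have := sub_dvd_pow_sub_pow (a ^ k) (-b ^ k) j
      rw [sub_neg_eq_add, hj.neg_pow, sub_neg_eq_add, ← pow_mul, ← pow_mul, mul_comm k j] at this
      exact hdk.trans this
    have h3 : (ℓ : ℤ) ∣ 2 * b ^ (j * k) := by
      have := dvd_sub h2 h1
      ring_nf at this ⊢
      exact this
    have h4 : (ℓ : ℤ) ∣ 2 := hbℓ.symm.pow_right.dvd_of_dvd_mul_right h3
    have := Int.le_of_dvd (by norm_num) h4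
    omega
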